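/- For each 0 < σ ≤ 1, the function f_σ(y) = (e^σ/π)·sin(πσ(1−y))·y^{σ(1−y)−1}·(1−y)^{−σ(1−y)} on (0,1) is a probability density, and for every λ > 0, ∫₀¹ f_σ(y)·(1+λy)^{-1} dy = e^σ·(1+λ)^{−σ(1+λ)/λ}. (Proposition 4.2(ii): f_σ is the density of β_{σ,1−σ}·M_σ(F_U), the beta-scaled Dirichlet mean of the uniform distribution, characterized by its order-1 Cauchy–Stieltjes transform e^{−σψ_{F_U}(λ)}.) -/

import Mathlib

open MeasureTheory

namespace BetaAux

noncomputable def Fc (σ : ℝ) (z : ℂ) : ℂ :=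
  Complex.exp (σ - σ * (Complex.exp z / dslope Complex.exp 0 z))

def Strip : Set ℂ := {z | |z.im| < 2 * Real.pi}

lemma strip_open : IsOpen Strip :=
  isOpen_lt (by fun_prop) (by fun_prop)

lemma real_mem_strip (a : ℝ) : (a : ℂ) ∈ Strip := by
  simp [Strip, Real.pi_pos]

lemma exp_sub_ne (a : ℝ) {z : ℂ} (hz : z ∈ Strip) (h : z ≠ a) :
    Complex.exp z - Complex.exp a ≠ 0 := by
  intro h0
  obtain ⟨n, hn⟩ := Complex.exp_eq_exp_iff_exists_int.1 (sub_eq_zero.1 h0)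
  have him := congrArg Complex.im hn
  simp at him
  have hz' : |z.im| < 2 * Real.pi := hz
  rw [him, abs_mul, abs_of_pos Real.two_pi_pos] at hz'
  have h1 : |(n:ℝ)| < 1 := by
    by_contra hc
    push Not at hc
    nlinarith [Real.pi_pos]
  have h2 : |n| < 1 := by exact_mod_cast h1
  have h3 : n = 0 := Int.abs_lt_one_iff.1 h2
  apply h
  simp [hn, h3]

lemma dslope_exp_ne (a : ℝ) {z : ℂ} (hz : z ∈ Strip) : dslope Complex.exp a z ≠ 0 := by
  by_cases h : z = a
  · rw [h, dslope_same]; simp [Complex.exp_ne_zero]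
  · rw [dslope_of_ne _ h, slope_def_field]
    exact div_ne_zero (exp_sub_ne a hz h) (sub_ne_zero.2 h)

lemma diff_dslope {f : ℂ → ℂ} (a : ℝ) (hf : DifferentiableOn ℂ f Strip) :
    DifferentiableOn ℂ (dslope f a) Strip :=
  (Complex.differentiableOn_dslope (strip_open.mem_nhds (real_mem_strip a))).2 hf

lemma diff_F (σ : ℝ) : DifferentiableOn ℂ (Fc σ) Strip := by
  have h0 := diff_dslope 0 (f := Complex.exp) Complex.differentiable_exp.differentiableOn
  unfold Fc
  have h1 : ∀ z ∈ Strip, dslope Complex.exp 0 z ≠ 0 := fun z hz => by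
    simpa using dslope_exp_ne 0 hz
  simp only [Complex.ofReal_zero] at h0
  apply DifferentiableOn.cexp
  apply DifferentiableOn.const_sub
  apply DifferentiableOn.const_mul
  exact DifferentiableOn.div Complex.differentiable_exp.differentiableOn h0 h1

noncomputable def Phi (σ a : ℝ) (z : ℂ) : ℂ :=
  Complex.exp z * (dslope (Fc σ) a z / dslope Complex.exp a z)

lemma diff_Phi (σ a : ℝ) : DifferentiableOn ℂ (Phi σ a) Strip := by
  unfold Phi
  exact Complex.differentiable_exp.differentiableOn.mul
    ((diff_dslope a (diff_F σ)).div
      (diff_dslope a Complex.differentiable_exp.differentiableOn) (fun z hz => dslope_exp_ne a hz))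

lemma F_eq (σ : ℝ) {z : ℂ} (hz : z ≠ 0) :
    Fc σ z = Complex.exp (σ - σ * (Complex.exp z * (z / (Complex.exp z - 1)))) := by
  unfold Fc
  rw [dslope_of_ne _ hz, slope_def_field]
  simp [div_eq_mul_inv]

lemma Phi_eq (σ a : ℝ) {z : ℂ} (hz : z ≠ a) :
    Phi σ a z = (Fc σ z - Fc σ a) * (Complex.exp z / (Complex.exp z - Complex.exp a)) := by
  unfold Phi
  rw [dslope_of_ne _ hz, slope_def_field, dslope_of_ne _ hz, slope_def_field,
    div_div_div_cancel_right₀ (sub_ne_zero.2 hz)]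
  ring

lemma rect (σ a R : ℝ) (hR : 0 < R):
    (∫ x in (-R)..R, (Phi σ a (x - Real.pi * Complex.I) - Phi σ a (x + Real.pi * Complex.I)))
      + Complex.I * (∫ y in (-Real.pi)..Real.pi, Phi σ a (R + y * Complex.I))
      - Complex.I * (∫ y in (-Real.pi)..Real.pi, Phi σ a (-R + y * Complex.I)) = 0 := by
  have hd := diff_Phi σ a
  have h := Complex.integral_boundary_rect_eq_zero_of_differentiableOn (Phi σ a)
    (-R - Real.pi * Complex.I) (R + Real.pi * Complex.I) (hd.mono (by
      intro z hz
      have := hz.2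
      simp at this
      rw [Set.uIcc_of_le (by linarith [Real.pi_pos])] at this
      have h2 : |z.im| ≤ Real.pi := abs_le.2 this
      change |z.im| < 2 * Real.pi
      linarith [Real.pi_pos]))
  have hi : ∀ c : ℝ, |c| ≤ Real.pi → IntervalIntegrable (fun x : ℝ => Phi σ a (x + c * Complex.I))
      MeasureTheory.volume (-R) R := by
    intro c hc
    apply Continuous.intervalIntegrable
    have := hd.continuousOn.comp_continuous (f := fun x : ℝ => (x + c * Complex.I : ℂ)) (by fun_prop)
      (fun x => by
        change |Complex.im _| < 2 * Real.pi
        simp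
        linarith [Real.pi_pos])
    exact this
  have h1 := hi (-Real.pi) (by rw [abs_neg, abs_of_pos Real.pi_pos])
  have h2 := hi (Real.pi) (by rw [abs_of_pos Real.pi_pos])
  simp only [Complex.ofReal_neg, neg_mul, ← sub_eq_add_neg] at h1
  rw [intervalIntegral.integral_sub h1 h2]
  simp at h
  simp only [← sub_eq_add_neg] at h
  exact h

lemma exp_sub_pi (x : ℝ) : Complex.exp (x - Real.pi * Complex.I) = -(Real.exp x : ℂ) := by
  rw [Complex.exp_sub, Complex.exp_pi_mul_I]; simp [div_neg]

lemma exp_add_pi (x : ℝ) : Complex.exp (x + Real.pi * Complex.I) = -(Real.exp x : ℂ) := by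
  rw [Complex.exp_add, Complex.exp_pi_mul_I]; simp

noncomputable def pp (x : ℝ) : ℝ := Real.exp x / (1 + Real.exp x)

noncomputable def gg (σ a x : ℝ) : ℝ :=
  Real.exp (σ - σ * pp x * x) * Real.sin (Real.pi * σ * pp x) *
    (Real.exp x / (Real.exp x + Real.exp a))

lemma F_bd (σ x : ℝ) {z : ℂ} (hz : z ≠ 0) (he : Complex.exp z = -(Real.exp x : ℂ)) :
    Fc σ z = Complex.exp (σ - σ * (pp x * z)) := by
  rw [F_eq _ hz, he]
  have h : (1 + Real.exp x : ℂ) ≠ 0 := by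
    have := (add_pos one_pos (Real.exp_pos x)).ne'
    exact_mod_cast this
  have h' : (-(Real.exp x : ℂ) - 1) ≠ 0 := by
    intro h0; apply h; linear_combination -h0
  congr 3
  unfold pp
  push_cast at *
  field_simp
  ring

lemma Phi_jump (σ a x : ℝ) :
    Phi σ a (x - Real.pi * Complex.I) - Phi σ a (x + Real.pi * Complex.I)
      = ((2 * gg σ a x : ℝ) : ℂ) * Complex.I := by
  have hne : ∀ (b : ℝ), (x - Real.pi * Complex.I : ℂ) ≠ b := by
    intro b h
    have := congrArg Complex.im h
    simp at this
  have hne' : ∀ (b : ℝ), (x + Real.pi * Complex.I : ℂ) ≠ b := by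
    intro b h
    have := congrArg Complex.im h
    simp at this
  have h0 := hne 0
  have h0' := hne' 0
  rw [Complex.ofReal_zero] at h0 h0'
  rw [Phi_eq _ _ (hne a), Phi_eq _ _ (hne' a), F_bd σ x h0 (exp_sub_pi x),
    F_bd σ x h0' (exp_add_pi x), exp_sub_pi, exp_add_pi, ← sub_mul, sub_sub_sub_cancel_right]
  have e1 : (σ - σ * (pp x * (x - Real.pi * Complex.I)) : ℂ)
    = ((σ - σ * pp x * x : ℝ) : ℂ) + ((Real.pi * σ * pp x : ℝ) : ℂ) * Complex.I := by
    push_cast; ring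
  have e2 : (σ - σ * (pp x * (x + Real.pi * Complex.I)) : ℂ)
    = ((σ - σ * pp x * x : ℝ) : ℂ) + ((-(Real.pi * σ * pp x) : ℝ) : ℂ) * Complex.I := by
    push_cast; ring
  rw [e1, e2, Complex.exp_add, Complex.exp_add, Complex.exp_mul_I, Complex.exp_mul_I]
  have e3 : (-(Real.exp x : ℂ) / (-(Real.exp x : ℂ) - Complex.exp a))
      = ((Real.exp x / (Real.exp x + Real.exp a) : ℝ) : ℂ) := by
    rw [← Complex.ofReal_exp, ← neg_add', neg_div_neg_eq]; push_cast; rfl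
  rw [e3]
  unfold gg
  rw [Complex.ofReal_neg, Complex.cos_neg, Complex.sin_neg, ← Complex.ofReal_sin,
    ← Complex.ofReal_exp (σ - _)]
  rw [Complex.ofReal_mul 2, Complex.ofReal_mul (_ * _) (_ / _), Complex.ofReal_mul (Real.exp _) (Real.sin _)]
  rw [Complex.ofReal_ofNat]
  ring

lemma quot_le {z : ℂ} (hr : 3 ≤ z.re) (hi : |z.im| ≤ Real.pi) :
    ‖z / (Complex.exp z - 1)‖ ≤ 1 := by
  rw [norm_div]
  have h1 : Real.exp z.re - 1 ≤ ‖Complex.exp z - 1‖ := by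
    have := norm_sub_norm_le (Complex.exp z) 1
    rwa [Complex.norm_exp, norm_one] at this
  have h2 := Real.quadratic_le_exp_of_nonneg (show 0 ≤ z.re by linarith)
  have h3 := Complex.norm_le_abs_re_add_abs_im z
  rw [abs_of_nonneg (show 0 ≤ z.re by linarith)] at h3
  apply div_le_one_of_le₀ _ (norm_nonneg _)
  nlinarith [Real.pi_lt_four]

lemma F_right (σ : ℝ) (hσ : 0 < σ) {z : ℂ} (hr : 3 ≤ z.re) (hi : |z.im| ≤ Real.pi) :
    ‖Fc σ z‖ ≤ Real.exp (2 * σ - σ * z.re) := by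
  have hz : z ≠ 0 := by rintro rfl; norm_num at hr
  have hne : Complex.exp z - 1 ≠ 0 := by
    intro h
    have : ‖Complex.exp z‖ = 1 := by rw [sub_eq_zero.1 h, norm_one]
    rw [Complex.norm_exp, Real.exp_eq_one_iff] at this
    linarith
  rw [F_eq σ hz, Complex.norm_exp, Real.exp_le_exp]
  have e : Complex.exp z * (z / (Complex.exp z - 1)) = z + z / (Complex.exp z - 1) := by
    field_simp; ring
  rw [e]
  have := (abs_le.1 ((Complex.abs_re_le_norm _).trans (quot_le hr hi))).1
  simp only [Complex.sub_re, Complex.ofReal_re, Complex.re_ofReal_mul, Complex.add_re]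
  nlinarith

lemma F_left (σ : ℝ) (hσ : 0 < σ) {z : ℂ} (hr : z.re ≤ -3) (hi : |z.im| ≤ Real.pi) :
    ‖Fc σ z‖ ≤ Real.exp (2 * σ) := by
  have hz : z ≠ 0 := by rintro rfl; norm_num at hr
  have hne : Complex.exp z - 1 ≠ 0 := by
    intro h
    have : ‖Complex.exp z‖ = 1 := by rw [sub_eq_zero.1 h, norm_one]
    rw [Complex.norm_exp, Real.exp_eq_one_iff] at this
    linarith
  have hne' : 1 - Complex.exp z ≠ 0 := by
    intro h; apply hne; linear_combination -h
  rw [F_eq σ hz, Complex.norm_exp, Real.exp_le_exp]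
  have e : Complex.exp z * (z / (Complex.exp z - 1)) = (-z) / (Complex.exp (-z) - 1) := by
    have := Complex.exp_ne_zero z
    rw [Complex.exp_neg]
    have h3 : (Complex.exp z)⁻¹ - 1 = (1 - Complex.exp z) / Complex.exp z := by field_simp
    rw [h3]
    field_simp
    ring
  rw [e]
  have := (abs_le.1 ((Complex.abs_re_le_norm _).trans (quot_le (z := -z)
    (by simp; linarith) (by simpa using hi)))).1
  simp only [Complex.sub_re, Complex.ofReal_re, Complex.re_ofReal_mul]
  nlinarith

open Filter Topology

lemma right_lim (σ a : ℝ) (hσ : 0 < σ) :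
    Tendsto (fun R : ℝ => ∫ y in (-Real.pi)..Real.pi, Phi σ a (R + y * Complex.I)) atTop
      (𝓝 (-(2 * Real.pi * Fc σ a))) := by
  set ε : ℝ → ℝ := fun R => Real.exp a / (Real.exp R - Real.exp a) with hε
  have hε0 : Tendsto ε atTop (𝓝 0) := by
    apply Tendsto.const_div_atTop
    exact tendsto_atTop_add_const_right _ _ Real.tendsto_exp_atTop
  have hb0 : Tendsto (fun R : ℝ => Real.exp (2 * σ - σ * R)) atTop (𝓝 0) := by
    apply Real.tendsto_exp_atBot.comp
    simp only [sub_eq_add_neg]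
    apply tendsto_atBot_add_const_left
    exact tendsto_neg_atTop_atBot.comp (tendsto_id.const_mul_atTop hσ)
  have hbd : Tendsto (fun R : ℝ => (Real.exp (2 * σ - σ * R) * (1 + ε R) + ‖Fc σ a‖ * ε R)
      * |Real.pi - (-Real.pi)|) atTop (𝓝 0) := by
    have := ((hb0.mul (hε0.const_add 1)).add (hε0.const_mul ‖Fc σ a‖)).mul_const
      (|Real.pi - (-Real.pi)|)
    simpa using this
  rw [tendsto_iff_norm_sub_tendsto_zero]
  refine squeeze_zero' (Eventually.of_forall fun _ => norm_nonneg _) ?_ hbd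
  filter_upwards [eventually_ge_atTop 3, eventually_gt_atTop a] with R h3 ha
  have hmem : ∀ y : ℝ, |y| ≤ Real.pi → (R + y * Complex.I : ℂ) ∈ Strip := by
    intro y hy
    change |Complex.im _| < 2 * Real.pi
    simp
    linarith [Real.pi_pos]
  have hint : IntervalIntegrable (fun y : ℝ => Phi σ a (R + y * Complex.I))
      MeasureTheory.volume (-Real.pi) Real.pi := by
    apply ContinuousOn.intervalIntegrable
    apply (diff_Phi σ a).continuousOn.comp (by fun_prop)
    intro y hy
    rw [Set.uIcc_of_le (by linarith [Real.pi_pos])] at hy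
    exact hmem y (abs_le.2 hy)
  have e : (∫ y in (-Real.pi)..Real.pi, Phi σ a (R + y * Complex.I)) - -(2 * Real.pi * Fc σ a)
      = ∫ y in (-Real.pi)..Real.pi, (Phi σ a (R + y * Complex.I) + Fc σ a) := by
    rw [intervalIntegral.integral_add hint (by simp)]
    rw [intervalIntegral.integral_const, Complex.real_smul]
    push_cast; ring
  rw [e]
  apply intervalIntegral.norm_integral_le_of_norm_le_const
  intro y hy
  rw [Set.uIoc_of_le (by linarith [Real.pi_pos])] at hy
  have hy' : |y| ≤ Real.pi := abs_le.2 ⟨hy.1.le, hy.2⟩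
  set z : ℂ := R + y * Complex.I with hz
  have hre : z.re = R := by simp [hz]
  have him : z.im = y := by simp [hz]
  have hza : z ≠ a := by
    intro h; have := congrArg Complex.re h; rw [hre] at this; simp at this; linarith
  have hd : Complex.exp z - Complex.exp a ≠ 0 := exp_sub_ne a (hmem y hy') hza
  have hlow : Real.exp R - Real.exp a ≤ ‖Complex.exp z - Complex.exp a‖ := by
    have := norm_sub_norm_le (Complex.exp z) (Complex.exp a)
    simpa [Complex.norm_exp, hre] using this
  have hpos : 0 < Real.exp R - Real.exp a := sub_pos.2 (Real.exp_lt_exp.2 ha)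
  have hF := F_right σ hσ (z := z) (by rw [hre]; exact h3) (by rw [him]; exact hy')
  rw [hre] at hF
  set q : ℂ := Complex.exp a / (Complex.exp z - Complex.exp a) with hq
  have hqn : ‖q‖ ≤ ε R := by
    change _ ≤ Real.exp a / (Real.exp R - Real.exp a)
    rw [hq, norm_div]
    have : ‖Complex.exp (a:ℂ)‖ = Real.exp a := by simp [Complex.norm_exp]
    rw [this]
    gcongr
  have e2 : Phi σ a z + Fc σ a = Fc σ z * (1 + q) - Fc σ a * q := by
    rw [Phi_eq _ _ hza, hq]
    field_simp
    ring
  rw [e2]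
  refine (norm_sub_le _ _).trans ?_
  rw [norm_mul, norm_mul]
  have hqq : ‖1 + q‖ ≤ 1 + ε R := (norm_add_le _ _).trans (by rw [norm_one]; linarith)
  gcongr

lemma left_lim (σ a : ℝ) (hσ : 0 < σ) :
    Tendsto (fun R : ℝ => ∫ y in (-Real.pi)..Real.pi, Phi σ a (-R + y * Complex.I)) atTop
      (𝓝 0) := by
  set ε : ℝ → ℝ := fun R => Real.exp (-R) / (Real.exp a - Real.exp (-R)) with hε
  have hε0 : Tendsto ε atTop (𝓝 0) := by
    have h1 : Tendsto (fun R : ℝ => Real.exp (-R)) atTop (𝓝 0) := Real.tendsto_exp_neg_atTop_nhds_zero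
    have := h1.div (h1.const_sub (Real.exp a)) (by simp [Real.exp_ne_zero])
    rw [zero_div] at this
    exact this
  have hbd : Tendsto (fun R : ℝ => ((Real.exp (2 * σ) + ‖Fc σ a‖) * ε R)
      * |Real.pi - (-Real.pi)|) atTop (𝓝 0) := by
    have := (hε0.const_mul (Real.exp (2 * σ) + ‖Fc σ a‖)).mul_const
      (|Real.pi - (-Real.pi)|)
    simpa using this
  rw [tendsto_zero_iff_norm_tendsto_zero]
  refine squeeze_zero' (Eventually.of_forall fun _ => norm_nonneg _) ?_ hbd
  filter_upwards [eventually_ge_atTop 3, eventually_gt_atTop (-a)] with R h3 ha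
  apply intervalIntegral.norm_integral_le_of_norm_le_const
  intro y hy
  rw [Set.uIoc_of_le (by linarith [Real.pi_pos])] at hy
  have hy' : |y| ≤ Real.pi := abs_le.2 ⟨hy.1.le, hy.2⟩
  set z : ℂ := -R + y * Complex.I with hz
  have hre : z.re = -R := by simp [hz]
  have him : z.im = y := by simp [hz]
  have hza : z ≠ a := by
    intro h; have := congrArg Complex.re h; rw [hre] at this; simp at this; linarith
  have hlow : Real.exp a - Real.exp (-R) ≤ ‖Complex.exp z - Complex.exp a‖ := by
    have := norm_sub_norm_le (Complex.exp a) (Complex.exp z)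
    rw [norm_sub_rev (Complex.exp a)] at this
    simpa [Complex.norm_exp, hre] using this
  have hpos : 0 < Real.exp a - Real.exp (-R) := sub_pos.2 (Real.exp_lt_exp.2 (by linarith))
  have hF := F_left σ hσ (z := z) (by rw [hre]; linarith) (by rw [him]; exact hy')
  rw [Phi_eq _ _ hza, norm_mul]
  have hqn : ‖Complex.exp z / (Complex.exp z - Complex.exp a)‖ ≤ ε R := by
    change _ ≤ Real.exp (-R) / (Real.exp a - Real.exp (-R))
    rw [norm_div, Complex.norm_exp, hre]
    gcongr
  have h1 : ‖Fc σ z - Fc σ a‖ ≤ Real.exp (2 * σ) + ‖Fc σ a‖ :=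
    (norm_sub_le _ _).trans (by linarith)
  gcongr

lemma pp_pos (x : ℝ) : 0 < pp x := by unfold pp; positivity
lemma pp_lt (x : ℝ) : pp x < 1 := by
  unfold pp; rw [div_lt_one (by positivity)]; linarith

lemma gg_lim (σ a A : ℝ) (hσ : 0 < σ) (hA : Fc σ a = A) :
    Tendsto (fun R : ℝ => ∫ x in (-R)..R, gg σ a x) atTop (𝓝 (Real.pi * A)) := by
  have h1 := ((left_lim σ a hσ).sub (right_lim σ a hσ)).const_mul (1/2 : ℂ)
  have h2 : Tendsto (fun R : ℝ => ((∫ x in (-R)..R, gg σ a x : ℝ) : ℂ)) atTop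
      (𝓝 ((Real.pi * A : ℝ) : ℂ)) := by
    have e : (1/2 : ℂ) * (0 - -(2 * Real.pi * Fc σ a)) = ((Real.pi * A : ℝ) : ℂ) := by
      rw [hA]; push_cast; ring
    rw [e] at h1
    refine h1.congr' ?_
    filter_upwards [eventually_gt_atTop 0] with R hR
    have h := rect σ a R hR
    simp only [Phi_jump] at h
    rw [intervalIntegral.integral_mul_const, intervalIntegral.integral_ofReal,
      intervalIntegral.integral_const_mul] at h
    have hI := Complex.I_ne_zero
    have h' : Complex.I * (2 * ((∫ x in (-R)..R, gg σ a x : ℝ) : ℂ)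
      + (∫ y in (-Real.pi)..Real.pi, Phi σ a (R + y * Complex.I))
      - (∫ y in (-Real.pi)..Real.pi, Phi σ a (-R + y * Complex.I))) = 0 := by
      rw [← h]; push_cast; ring
    have h'' := (mul_eq_zero.1 h').resolve_left hI
    linear_combination (-1/2 : ℂ) * h''
  have h3 := (Complex.continuous_re.tendsto _).comp h2
  exact h3

lemma gg_integral (σ a A : ℝ) (hσ : 0 < σ) (hσ1 : σ ≤ 1) (hA : Fc σ a = A) :
    ∫ x, gg σ a x = Real.pi * A := by
  have hpos : ∀ x, 0 ≤ gg σ a x := by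
    intro x
    have := pp_pos x
    have := pp_lt x
    have hs : 0 ≤ Real.sin (Real.pi * σ * pp x) := by
      apply Real.sin_nonneg_of_nonneg_of_le_pi
      · have := Real.pi_pos; positivity
      · rw [mul_assoc]
        exact mul_le_of_le_one_right Real.pi_pos.le (by nlinarith)
    unfold gg
    positivity
  have hcp : Continuous pp := by
    unfold pp
    exact Real.continuous_exp.div (by fun_prop) (fun x => by positivity)
  have hc : Continuous (gg σ a) := by
    unfold gg
    refine Continuous.mul (by fun_prop) ?_
    exact Real.continuous_exp.div (by fun_prop) (fun x => by positivity)
  have hl := gg_lim σ a A hσ hA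
  have hi : MeasureTheory.Integrable (gg σ a) := by
    refine MeasureTheory.integrable_of_intervalIntegral_norm_tendsto (Real.pi * A)
      (a := fun R : ℝ => -R) (b := fun R : ℝ => R) (l := atTop) ?_ tendsto_neg_atTop_atBot
      tendsto_id ?_
    · intro R
      exact (hc.integrableOn_Icc).mono_set Set.Ioc_subset_Icc_self
    · refine hl.congr (fun R => ?_)
      congr 1
      ext x
      rw [Real.norm_of_nonneg (hpos x)]
  exact tendsto_nhds_unique (MeasureTheory.intervalIntegral_tendsto_integral hi
    tendsto_neg_atTop_atBot tendsto_id) hl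

lemma F_zero (σ : ℝ) : Fc σ (0:ℝ) = (1:ℝ) := by
  unfold Fc
  simp

lemma F_log (σ l : ℝ) (hl : 0 < l) :
    Fc σ (Real.log (1 + l)) = (Real.exp σ * (1 + l) ^ (-(σ * (1 + l) / l)) : ℝ) := by
  have hlog : 0 < Real.log (1 + l) := Real.log_pos (by linarith)
  rw [F_eq _ (by exact_mod_cast hlog.ne')]
  rw [← Complex.ofReal_exp, Real.exp_log (by linarith), Real.rpow_def_of_pos (by linarith),
    ← Real.exp_add, Complex.ofReal_exp]
  congr 1
  push_cast
  have : (l : ℂ) ≠ 0 := by exact_mod_cast hl.ne'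
  have h2 : (1 + l - 1 : ℂ) ≠ 0 := by simpa using this
  rw [add_sub_cancel_left]
  field_simp
  ring

lemma key (σ l A : ℝ) (hσ : 0 < σ) (hσ1 : σ ≤ 1) (hl : 0 ≤ l)
    (hA : Fc σ (Real.log (1 + l)) = A) :
    ∫ y in Set.Ioo (0:ℝ) 1,
        (Real.exp σ / Real.pi) * Real.sin (Real.pi * σ * (1 - y)) *
          y ^ (σ * (1 - y) - 1) * (1 - y) ^ (-(σ * (1 - y))) * (1 + l * y)⁻¹ = A := by
  set φ : ℝ → ℝ := fun x => (1 + Real.exp x)⁻¹ with hφ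
  have himg : φ '' Set.univ = Set.Ioo 0 1 := by
    ext y
    simp only [Set.image_univ, Set.mem_range, Set.mem_Ioo, hφ]
    constructor
    · rintro ⟨x, rfl⟩
      have := Real.exp_pos x
      exact ⟨by positivity, inv_lt_one_of_one_lt₀ (by linarith)⟩
    · rintro ⟨h0, h1⟩
      refine ⟨Real.log (y⁻¹ - 1), ?_⟩
      have := (one_lt_inv₀ h0).2 h1
      rw [Real.exp_log (by linarith)]
      simp
  have hder : ∀ x ∈ Set.univ, HasDerivWithinAt φ (-Real.exp x / (1 + Real.exp x) ^ 2)
      Set.univ x := by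
    intro x _
    have h : HasDerivAt (fun x => 1 + Real.exp x) (Real.exp x) x :=
      (Real.hasDerivAt_exp x).const_add 1
    exact (h.inv (by positivity)).hasDerivWithinAt
  have hinj : Set.InjOn φ Set.univ := by
    intro x _ y _ h
    have := inv_injective h
    simpa using this
  rw [← himg, MeasureTheory.integral_image_eq_integral_abs_deriv_smul MeasurableSet.univ hder hinj,
    MeasureTheory.setIntegral_univ]
  have := gg_integral σ (Real.log (1 + l)) A hσ hσ1 hA
  have hpi := Real.pi_pos
  calc _ = ∫ x, Real.pi⁻¹ * gg σ (Real.log (1 + l)) x := by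
        congr 1
        ext x
        have he := Real.exp_pos x
        have h1 : 1 - φ x = pp x := by
          simp only [hφ, pp]; field_simp; ring
        have hφp : 0 < φ x := by simp only [hφ]; positivity
        have hpp := pp_pos x
        have hlφ : Real.log (φ x) = -Real.log (1 + Real.exp x) := by
          simp only [hφ, Real.log_inv]
        have hlp : Real.log (pp x) = x - Real.log (1 + Real.exp x) := by
          unfold pp
          rw [Real.log_div he.ne' (by positivity), Real.log_exp]
        have hr : φ x ^ (σ * pp x - 1) * pp x ^ (-(σ * pp x))
            = Real.exp (-(σ * pp x * x)) * (1 + Real.exp x) := by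
          rw [Real.rpow_def_of_pos hφp, Real.rpow_def_of_pos hpp, hlφ, hlp, ← Real.exp_add]
          nth_rewrite 3 [← Real.exp_log (show 0 < 1 + Real.exp x by positivity)]
          rw [← Real.exp_add]
          congr 1
          ring
        have habs : |(-Real.exp x / (1 + Real.exp x) ^ 2)| = Real.exp x / (1 + Real.exp x) ^ 2 := by
          rw [neg_div, abs_neg, abs_of_pos (by positivity)]
        rw [habs, h1, smul_eq_mul, mul_assoc _ (φ x ^ _) (pp x ^ _), hr]
        unfold gg
        rw [Real.exp_log (by linarith), sub_eq_add_neg, Real.exp_add]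
        simp only [hφ]
        have : (1 + l * (1 + Real.exp x)⁻¹) = (Real.exp x + (1 + l)) / (1 + Real.exp x) := by
          field_simp; ring
        rw [this]
        have : 0 < Real.exp x + (1 + l) := by positivity
        field_simp
    _ = A := by
        rw [MeasureTheory.integral_const_mul, this]
        field_simp

end BetaAux

open BetaAux

/-- Proposition 4.2(ii): for `0 < σ ≤ 1`, the function
`f_σ(y) = (e^σ/π)·sin(πσ(1−y))·y^{σ(1−y)−1}·(1−y)^{−σ(1−y)}` is a probability
density on `(0,1)`, and for every `λ > 0`,
`∫₀¹ f_σ(y)/(1+λy) dy = e^σ·(1+λ)^{−σ(1+λ)/λ}`. -/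
theorem density_of_beta_scaled_uniform_mean
    (σ : ℝ) (hσ0 : 0 < σ) (hσ1 : σ ≤ 1) :
    (∀ y ∈ Set.Ioo (0:ℝ) 1,
      0 ≤ (Real.exp σ / Real.pi) * Real.sin (Real.pi * σ * (1 - y)) *
        y ^ (σ * (1 - y) - 1) * (1 - y) ^ (-(σ * (1 - y)))) ∧
    (∫ y in Set.Ioo (0:ℝ) 1,
      (Real.exp σ / Real.pi) * Real.sin (Real.pi * σ * (1 - y)) *
        y ^ (σ * (1 - y) - 1) * (1 - y) ^ (-(σ * (1 - y))) = 1) ∧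
    (∀ l : ℝ, 0 < l →
      ∫ y in Set.Ioo (0:ℝ) 1,
        (Real.exp σ / Real.pi) * Real.sin (Real.pi * σ * (1 - y)) *
          y ^ (σ * (1 - y) - 1) * (1 - y) ^ (-(σ * (1 - y))) * (1 + l * y)⁻¹
        = Real.exp σ * (1 + l) ^ (-(σ * (1 + l) / l))) := by
  refine ⟨?_, ?_, fun l hl => key σ l _ hσ0 hσ1 hl.le (F_log σ l hl)⟩
  · rintro y ⟨h0, h1⟩
    have hpi := Real.pi_pos
    have h2 : 0 < 1 - y := by linarith
    have hs : 0 ≤ Real.sin (Real.pi * σ * (1 - y)) := by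
      apply Real.sin_nonneg_of_nonneg_of_le_pi
      · positivity
      · rw [mul_assoc]
        exact mul_le_of_le_one_right hpi.le (by nlinarith)
    positivity
  · have h := key σ 0 1 hσ0 hσ1 le_rfl (by simpa using F_zero σ)
    simpa using h
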